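/- arXiv:2307.15564 — 3 statements merged into one kernel-verified Lean document; each statement's English description precedes it below -/
import Mathlib

section
/- Let U ⊆ ℝⁿ be open and let K : U → Mat_n(ℝ) be a smooth matrix-valued map. Let σ₁,…,σₙ : U → ℝ be the (smooth) functions determined by det(t·I − K(x)) = tⁿ − σ₁(x)·t^{n−1} − σ₂(x)·t^{n−2} − … − σₙ(x). For a smooth matrix-valued map A : U → Mat_n(ℝ) define D(A)ᵢ(x) := Σ_{s=1}^n ∂/∂x^s [A(x)]_{s,i}. Then for every i ∈ {1,…,n} and every x ∈ U: Σ_{m=1}^n Σ_{s=1}^n (∂σ_m/∂x^s)(x) · [K(x)^{n−m}]_{s,i} = D(Kⁿ)ᵢ(x) − Σ_{m=1}^{n−1} σ_m(x) · D(K^{n−m})ᵢ(x), where K⁰ = I. -/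
open scoped BigOperators

/-- Partial derivative of `f : ℝⁿ → ℝ` in the `s`-th coordinate direction. -/
noncomputable def pd {n : ℕ} (f : (Fin n → ℝ) → ℝ) (s : Fin n) (x : Fin n → ℝ) : ℝ :=
  fderiv ℝ f x (Pi.single s 1)

/-- The coefficient functions `σₘ` of the characteristic polynomial of a matrix-valued map,
in the convention `det(t·I − K(x)) = tⁿ − σ₁(x) t^{n−1} − … − σₙ(x)`. -/
noncomputable def sigmaCoeff {n : ℕ} (K : (Fin n → ℝ) → Matrix (Fin n) (Fin n) ℝ)
    (m : ℕ) (x : Fin n → ℝ) : ℝ :=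
  -(Matrix.charpoly (K x)).coeff (n - m)

/-- `D(A)ᵢ(x) = Σ_s ∂/∂x^s [A(x)]_{s,i}`. -/
noncomputable def Dop {n : ℕ} (A : (Fin n → ℝ) → Matrix (Fin n) (Fin n) ℝ)
    (i : Fin n) (x : Fin n → ℝ) : ℝ :=
  ∑ s : Fin n, pd (fun y => A y s i) s x

/-! By Cayley–Hamilton, `Kⁿ = ∑_{m=1}^n σ_m K^{n-m}`. Apply `D` to both sides: the product rule
`D(σ A)_i = ∑_s (∂_s σ) A_{s,i} + σ D(A)_i` gives the identity, once one notes that the term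
`σ_n D(K⁰)` vanishes because `K⁰ = I` is constant. -/

theorem matrix_pow_card_eq_neg_sum_charpoly_coeff_smul {R ι : Type*} [CommRing R] [Fintype ι]
    [DecidableEq ι] (M : Matrix ι ι R) :
    M ^ Fintype.card ι = -∑ k ∈ Finset.range (Fintype.card ι), M.charpoly.coeff k • M ^ k := by
  nontriviality R
  have h := M.aeval_self_charpoly
  rw [M.charpoly_monic.as_sum, M.charpoly_natDegree_eq_dim] at h
  simp only [map_add, map_sum, map_mul, map_pow, Polynomial.aeval_X, Polynomial.aeval_C,
    ← Algebra.smul_def] at h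
  exact eq_neg_of_add_eq_zero_left h

theorem sum_Icc_one_flip {M : Type*} [AddCommMonoid M] (n : ℕ) (f : ℕ → M) :
    ∑ m ∈ Finset.Icc 1 n, f (n - m) = ∑ k ∈ Finset.range n, f k :=
  Finset.sum_nbij' (n - ·) (n - ·) (by grind) (by grind) (by grind) (by grind) (by simp)

section Differentiability

variable {𝕜 E : Type*} [NontriviallyNormedField 𝕜] [NormedAddCommGroup E] [NormedSpace 𝕜 E]
  {x : E}

theorem differentiableAt_eval_mvPolynomial {τ : Type*} {f : E → τ → 𝕜}
    (hf : ∀ a, DifferentiableAt 𝕜 (fun y => f y a) x) (p : MvPolynomial τ 𝕜) :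
    DifferentiableAt 𝕜 (fun y => MvPolynomial.eval (f y) p) x := by
  induction p using MvPolynomial.induction_on with
  | C c => simpa only [MvPolynomial.eval_C] using differentiableAt_const c
  | add p q hp hq => simpa only [map_add] using hp.fun_add hq
  | mul_X p a hp => simpa only [map_mul, MvPolynomial.eval_X] using hp.fun_mul (hf a)

variable {ι : Type*} [Fintype ι] [DecidableEq ι] {K : E → Matrix ι ι 𝕜}

theorem differentiableAt_matrix_pow_apply (hK : ∀ i j, DifferentiableAt 𝕜 (fun y => K y i j) x)
    (k : ℕ) (i j : ι) : DifferentiableAt 𝕜 (fun y => (K y ^ k) i j) x := by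
  induction k generalizing j with
  | zero => simp
  | succ k ih =>
    simp only [pow_succ, Matrix.mul_apply]
    exact .fun_sum fun l _ => (ih l).mul (hK l j)

theorem differentiableAt_charpoly_coeff (hK : ∀ i j, DifferentiableAt 𝕜 (fun y => K y i j) x)
    (k : ℕ) : DifferentiableAt 𝕜 (fun y => (K y).charpoly.coeff k) x := by
  let entries (y : E) (p : ι × ι) : 𝕜 := K y p.1 p.2
  have eval_univ (y : E) : MvPolynomial.eval (entries y) ((Matrix.charpoly.univ 𝕜 ι).coeff k) =
      (K y).charpoly.coeff k :=
    Matrix.charpoly.univ_coeff_eval₂Hom ι (RingHom.id 𝕜) (entries y) k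
  simpa only [eval_univ] using differentiableAt_eval_mvPolynomial (f := entries)
    (fun p => hK p.1 p.2) ((Matrix.charpoly.univ 𝕜 ι).coeff k)

end Differentiability

section DopCalculus

variable {n : ℕ} {x : Fin n → ℝ}

theorem pd_sum {τ : Type*} {t : Finset τ} {f : τ → (Fin n → ℝ) → ℝ}
    (hf : ∀ m ∈ t, DifferentiableAt ℝ (f m) x) (s : Fin n) :
    pd (fun y => ∑ m ∈ t, f m y) s x = ∑ m ∈ t, pd (f m) s x := by
  simp only [pd, fderiv_fun_sum hf, sum_apply]

theorem pd_mul {f g : (Fin n → ℝ) → ℝ} (hf : DifferentiableAt ℝ f x)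
    (hg : DifferentiableAt ℝ g x) (s : Fin n) :
    pd (fun y => f y * g y) s x = pd f s x * g x + f x * pd g s x := by
  simp only [pd, fderiv_fun_mul hf hg, add_apply, smul_apply, smul_eq_mul]
  ring

theorem dop_const (A : Matrix (Fin n) (Fin n) ℝ) (i : Fin n) (x : Fin n → ℝ) :
    Dop (fun _ => A) i x = 0 := by
  simp [Dop, pd]

theorem dop_sum {τ : Type*} {t : Finset τ} {A : τ → (Fin n → ℝ) → Matrix (Fin n) (Fin n) ℝ}
    {i : Fin n} (hA : ∀ m ∈ t, ∀ s, DifferentiableAt ℝ (fun y => A m y s i) x) :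
    Dop (fun y => ∑ m ∈ t, A m y) i x = ∑ m ∈ t, Dop (A m) i x := by
  simp only [Dop, Matrix.sum_apply]
  rw [Finset.sum_comm]
  exact Finset.sum_congr rfl fun s _ => pd_sum (fun m hm => hA m hm s) s

theorem dop_smul {f : (Fin n → ℝ) → ℝ} {A : (Fin n → ℝ) → Matrix (Fin n) (Fin n) ℝ} {i : Fin n}
    (hf : DifferentiableAt ℝ f x) (hA : ∀ s, DifferentiableAt ℝ (fun y => A y s i) x) :
    Dop (fun y => f y • A y) i x = ∑ s, pd f s x * A x s i + f x * Dop A i x := by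
  simp only [Dop, Matrix.smul_apply, smul_eq_mul, pd_mul hf (hA _), Finset.sum_add_distrib,
    Finset.mul_sum]

theorem sum_mul_dop_pow_eq_sum_Icc_pred (c : ℕ → ℝ)
    (K : (Fin n → ℝ) → Matrix (Fin n) (Fin n) ℝ) (i : Fin n) (x : Fin n → ℝ) :
    ∑ m ∈ Finset.Icc 1 n, c m * Dop (fun y => K y ^ (n - m)) i x =
      ∑ m ∈ Finset.Icc 1 (n - 1), c m * Dop (fun y => K y ^ (n - m)) i x := by
  obtain _ | n := n
  · exact i.elim0
  · simp [Finset.sum_Icc_succ_top, dop_const]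

end DopCalculus

section SigmaCoeff

variable {n : ℕ}

theorem pow_eq_sum_sigmaCoeff_smul (K : (Fin n → ℝ) → Matrix (Fin n) (Fin n) ℝ)
    (x : Fin n → ℝ) :
    K x ^ n = ∑ m ∈ Finset.Icc 1 n, sigmaCoeff K m x • K x ^ (n - m) := by
  have h := matrix_pow_card_eq_neg_sum_charpoly_coeff_smul (K x)
  rw [Fintype.card_fin, ← sum_Icc_one_flip] at h
  simpa only [sigmaCoeff, neg_smul, Finset.sum_neg_distrib] using h

variable {K : (Fin n → ℝ) → Matrix (Fin n) (Fin n) ℝ} {x : Fin n → ℝ}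

theorem differentiableAt_sigmaCoeff (hK : ∀ i j, DifferentiableAt ℝ (fun y => K y i j) x)
    (m : ℕ) : DifferentiableAt ℝ (sigmaCoeff K m) x :=
  (differentiableAt_charpoly_coeff hK (n - m)).fun_neg

theorem sigma_derivative_identity_general
    (hK : ∀ i j, DifferentiableAt ℝ (fun y => K y i j) x) (i : Fin n) :
    (∑ m ∈ Finset.Icc 1 n, ∑ s : Fin n, pd (sigmaCoeff K m) s x * (K x ^ (n - m)) s i)
      = Dop (fun y => K y ^ n) i x
          - ∑ m ∈ Finset.Icc 1 (n - 1),
              sigmaCoeff K m x * Dop (fun y => K y ^ (n - m)) i x := by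
  have hσ := differentiableAt_sigmaCoeff hK
  have hpow (m : ℕ) (s : Fin n) := differentiableAt_matrix_pow_apply hK (n - m) s i
  rw [eq_sub_iff_add_eq, ← sum_mul_dop_pow_eq_sum_Icc_pred, ← Finset.sum_add_distrib, eq_comm]
  calc Dop (fun y => K y ^ n) i x
    _ = Dop (fun y => ∑ m ∈ Finset.Icc 1 n, sigmaCoeff K m y • K y ^ (n - m)) i x := by
      simp only [← pow_eq_sum_sigmaCoeff_smul]
    _ = ∑ m ∈ Finset.Icc 1 n, Dop (fun y => sigmaCoeff K m y • K y ^ (n - m)) i x :=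
      dop_sum fun m _ s => (hσ m).fun_mul (hpow m s)
    _ = ∑ m ∈ Finset.Icc 1 n, (∑ s, pd (sigmaCoeff K m) s x * (K x ^ (n - m)) s i
          + sigmaCoeff K m x * Dop (fun y => K y ^ (n - m)) i x) :=
      Finset.sum_congr rfl fun m _ => dop_smul (hσ m) (hpow m)

end SigmaCoeff

theorem sigma_derivative_identity {n : ℕ} (U : Set (Fin n → ℝ)) (hU : IsOpen U)
    (K : (Fin n → ℝ) → Matrix (Fin n) (Fin n) ℝ)
    (hK : ∀ i j : Fin n, ContDiffOn ℝ (⊤ : ℕ∞) (fun x => K x i j) U) :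
    ∀ i : Fin n, ∀ x ∈ U,
      (∑ m ∈ Finset.Icc 1 n, ∑ s : Fin n,
          pd (sigmaCoeff K m) s x * ((K x) ^ (n - m)) s i)
        = Dop (fun y => (K y) ^ n) i x
            - ∑ m ∈ Finset.Icc 1 (n - 1), sigmaCoeff K m x * Dop (fun y => (K y) ^ (n - m)) i x := by
  intro i x hx
  exact sigma_derivative_identity_general
    (fun a b => ((hK a b).contDiffAt (hU.mem_nhds hx)).differentiableAt (by simp)) i
end

section
/- Let m₁,…,m_k ≥ 1 with n = m₁+…+m_k, set M₀ = 0 and M_s = m₁+…+m_s. Let U ⊆ ℝⁿ be open and let λ₁,…,λ_k : U → ℝ be smooth with λ_r(x) ≠ λ_s(x) for all r ≠ s and all x ∈ U. Let K(x) be the n×n block-diagonal matrix with blocks J_{m₁}(λ₁(x)),…,J_{m_k}(λ_k(x)). Let σ₁,…,σₙ : U → ℝ be determined by det(t·I − K(x)) = tⁿ − σ₁(x)·t^{n−1} − … − σₙ(x), and define the row vector V(x) ∈ ℝⁿ by Vᵢ(x) = Σ_{m=1}^n Σ_{s=1}^n (∂σ_m/∂x^s)(x) · [K(x)^{n−m}]_{s,i}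 (with K⁰ = I). Then for every s ∈ {1,…,k}: Vⱼ(x) = 0 for every index j with M_{s−1} < j < M_s, and V_{M_s}(x) = m_s · (∂λ_s/∂x^{M_{s−1}+1})(x) · Π_{r≠s} (λ_s(x) − λ_r(x))^{m_r}. -/
open scoped BigOperators

/-- Partial sums of block sizes: `Msum m s = m 0 + … + m (s-1)`, so `Msum m 0 = 0`. -/
def Msum (m : ℕ → ℕ) (s : ℕ) : ℕ :=
  ∑ r ∈ Finset.range s, m r

/-- The (0-indexed) block to which the (0-indexed) position `i` belongs, for block sizes
`m 0, …, m (k-1)`. -/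
def blk (k : ℕ) (m : ℕ → ℕ) (i : ℕ) : ℕ :=
  ((Finset.range k).filter (fun s => Msum m (s + 1) ≤ i)).card

/-- The `n × n` block-diagonal matrix with Jordan blocks `J_{m 0}(lam 0), …, J_{m (k-1)}(lam (k-1))`
(evaluated at the point `x`). -/
noncomputable def KblockDiag {n : ℕ} (k : ℕ) (m : ℕ → ℕ) (lam : ℕ → (Fin n → ℝ) → ℝ)
    (x : Fin n → ℝ) : Matrix (Fin n) (Fin n) ℝ :=
  fun i j =>
    if (j : ℕ) = (i : ℕ) then lam (blk k m i) x
    else if (j : ℕ) = (i : ℕ) + 1 ∧ blk k m j = blk k m i then 1 else 0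

/-- The row vector `Vᵢ(x) = Σ_{m=1}^n Σ_{s=1}^n (∂σₘ/∂x^s)(x) · [K(x)^{n−m}]_{s,i}`. -/
noncomputable def Vvec {n : ℕ} (K : (Fin n → ℝ) → Matrix (Fin n) (Fin n) ℝ)
    (i : Fin n) (x : Fin n → ℝ) : ℝ :=
  ∑ m ∈ Finset.Icc 1 n, ∑ s : Fin n, pd (sigmaCoeff K m) s x * ((K x) ^ (n - m)) s i

/-!
Let `χ` be the characteristic polynomial of `K` and `∂ₐχ` its coefficientwise derivative in the
direction `a`, a polynomial of degree less than `n`. Reading the powers of `K` in the definition of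
`V` as an evaluation gives `V_c = -∑ₐ [(∂ₐχ)(K)]_{a,c}`. Since `χ = (X - λ_s)^{m_s} g` with
`g = ∏_{r ≠ s} (X - λ_r)^{m_r}`, the product rule gives
`∂ₐχ = (X - λ_s)^{m_s - 1} ((X - λ_s) ∂ₐg - m_s ∂ₐλ_s g)`. A column `c` in the block `s` only meets
the rows of that block, where `f(K)` is the upper triangular Toeplitz matrix of the Taylor
coefficients of `f` at `λ_s`. For `f = ∂ₐχ` the coefficients below `m_s - 1` vanish, so only the
upper right corner of the block survives, with the value `-m_s ∂ₐλ_s g(λ_s)`.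
-/

open Polynomial

section HasCoeffDerivAt

variable {𝕜 E : Type*} [NontriviallyNormedField 𝕜] [NormedAddCommGroup E] [NormedSpace 𝕜 E]

/-- `P'` is the derivative at `x` in the direction `v` of the polynomial-valued map `P`, taken
coefficient by coefficient. Full differentiability of the coefficients is part of the notion, so
that it is stable under products. -/
def HasCoeffDerivAt (P : E → 𝕜[X]) (P' : 𝕜[X]) (x v : E) : Prop :=
  ∀ j, DifferentiableAt 𝕜 (fun y => (P y).coeff j) x ∧
    fderiv 𝕜 (fun y => (P y).coeff j) x v = P'.coeff j

namespace HasCoeffDerivAt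

variable {P Q : E → 𝕜[X]} {P' Q' : 𝕜[X]} {x v : E}

lemma const (p : 𝕜[X]) : HasCoeffDerivAt (fun _ : E => p) 0 x v := fun j => by simp

lemma X_sub_C {f : E → 𝕜} (hf : DifferentiableAt 𝕜 f x) :
    HasCoeffDerivAt (fun y => X - C (f y)) (-C (fderiv 𝕜 f x v)) x v := by
  rintro (_ | j)
  · simp only [coeff_sub, coeff_X_zero, coeff_C_zero, coeff_neg, zero_sub]
    exact ⟨hf.fun_neg, by rw [fderiv_fun_neg, neg_apply]⟩
  · simp

lemma mul (hP : HasCoeffDerivAt P P' x v) (hQ : HasCoeffDerivAt Q Q' x v) :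
    HasCoeffDerivAt (fun y => P y * Q y) (P' * Q x + P x * Q') x v := by
  intro j
  have hprod : HasFDerivAt (fun y => (P y * Q y).coeff j)
      (∑ a ∈ Finset.HasAntidiagonal.antidiagonal j,
        ((P x).coeff a.1 • fderiv 𝕜 (fun y => (Q y).coeff a.2) x +
          (Q x).coeff a.2 • fderiv 𝕜 (fun y => (P y).coeff a.1) x)) x := by
    simp only [coeff_mul]
    exact HasFDerivAt.fun_sum fun a _ => (hP a.1).1.hasFDerivAt.mul (hQ a.2).1.hasFDerivAt
  refine ⟨hprod.differentiableAt, ?_⟩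
  rw [hprod.fderiv, coeff_add, coeff_mul, coeff_mul, ← Finset.sum_add_distrib, sum_apply]
  refine Finset.sum_congr rfl fun a _ => ?_
  simp only [add_apply, FunLike.coe_smul, Pi.smul_apply, smul_eq_mul, (hP a.1).2, (hQ a.2).2]
  ring

lemma pow (hP : HasCoeffDerivAt P P' x v) (e : ℕ) :
    HasCoeffDerivAt (fun y => P y ^ e) (C (e : 𝕜) * P x ^ (e - 1) * P') x v := by
  induction e with
  | zero => simpa using const (1 : 𝕜[X])
  | succ e ih =>
    simp only [pow_succ]
    convert ih.mul hP using 1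
    rcases e with _ | e
    · simp
    · simp only [Nat.add_sub_cancel, pow_succ, Nat.cast_succ, C_add, C_1]
      ring

lemma exists_prod {ι : Type*} {T : Finset ι} {P : ι → E → 𝕜[X]}
    (hP : ∀ r ∈ T, ∃ P', HasCoeffDerivAt (P r) P' x v) :
    ∃ P', HasCoeffDerivAt (fun y => ∏ r ∈ T, P r y) P' x v := by
  classical
  induction T using Finset.induction_on with
  | empty => exact ⟨0, const 1⟩
  | insert r T hr ih =>
    obtain ⟨P', hP'⟩ := hP r (Finset.mem_insert_self r T)
    obtain ⟨Q', hQ'⟩ := ih fun q hq => hP q (Finset.mem_insert_of_mem hq)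
    simp only [Finset.prod_insert hr]
    exact ⟨_, hP'.mul hQ'⟩

lemma X_sub_C_pow_mul {f : E → 𝕜} (hf : DifferentiableAt 𝕜 f x) {e : ℕ} (he : e ≠ 0)
    (hQ : HasCoeffDerivAt Q Q' x v) :
    HasCoeffDerivAt (fun y => (X - C (f y)) ^ e * Q y)
      ((X - C (f x)) ^ (e - 1) * ((X - C (f x)) * Q' - C (e * fderiv 𝕜 f x v) * Q x)) x v := by
  convert ((X_sub_C hf).pow e).mul hQ using 1
  rw [← mul_pow_sub_one he (X - C (f x)), C_mul]
  ring

lemma degree_lt_of_monic {n : ℕ} (hP : HasCoeffDerivAt P P' x v) (hmonic : ∀ y, (P y).Monic)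
    (hdeg : ∀ y, (P y).natDegree = n) : P'.degree < n := by
  rw [degree_lt_iff_coeff_zero]
  intro j hj
  have hconst : (fun y => (P y).coeff j) = fun _ => if j = n then 1 else 0 := by
    funext y
    split_ifs with hjn
    · rw [hjn, ← hdeg y, (hmonic y).coeff_natDegree]
    · exact coeff_eq_zero_of_natDegree_lt (by rw [hdeg y]; omega)
  rw [← (hP j).2, hconst, fderiv_fun_const, Pi.zero_apply, zero_apply]

end HasCoeffDerivAt

end HasCoeffDerivAt

lemma Vvec_eq_neg_sum_aeval {n : ℕ} {K : (Fin n → ℝ) → Matrix (Fin n) (Fin n) ℝ}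
    {x : Fin n → ℝ} {P' : Fin n → ℝ[X]}
    (hP' : ∀ a, HasCoeffDerivAt (fun y => (K y).charpoly) (P' a) x (Pi.single a 1)) (c : Fin n) :
    Vvec K c x = -∑ a, aeval (K x) (P' a) a c := by
  have hpd (a : Fin n) (i : ℕ) : pd (sigmaCoeff K i) a x = -(P' a).coeff (n - i) := by
    rw [pd, show sigmaCoeff K i = fun y => -(K y).charpoly.coeff (n - i) from rfl, fderiv_fun_neg,
      neg_apply, (hP' a (n - i)).2]
  have haeval (a : Fin n) :
      aeval (K x) (P' a) a c = ∑ i ∈ Finset.range n, (P' a).coeff i * (K x ^ i) a c := by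
    have hdeg : (P' a).degree < n := (hP' a).degree_lt_of_monic
      (fun y => (K y).charpoly_monic) fun y => by simp
    rw [aeval_def, eval₂_eq_sum, ← sum_fin _ (by simp) hdeg, Matrix.sum_apply, Finset.sum_range]
    simp [← Algebra.smul_def]
  rw [Vvec, Finset.sum_comm, ← Finset.sum_neg_distrib]
  refine Finset.sum_congr rfl fun a _ => ?_
  rw [haeval, ← Finset.sum_neg_distrib]
  refine Finset.sum_bij' (fun i _ => n - i) (fun i _ => n - i) ?_ ?_ ?_ ?_ ?_
  all_goals simp only [Finset.mem_Icc, Finset.mem_range]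
  · omega
  · omega
  · omega
  · omega
  · intro i _
    rw [hpd, neg_mul]

lemma coeff_taylor_X_sub_C_pow_mul {R : Type*} [CommRing R] (a : R) (e d : ℕ) (f : R[X]) :
    (taylor a ((X - C a) ^ e * f)).coeff d = if e ≤ d then (taylor a f).coeff (d - e) else 0 := by
  rw [taylor_mul, taylor_pow, map_sub, taylor_X, taylor_C, add_sub_cancel_right, coeff_X_pow_mul']

/-- The `d × d` Jordan block with eigenvalue `a`, with ones above the diagonal. -/
def jordanBlock {R : Type*} [Zero R] [One R] (d : ℕ) (a : R) : Matrix (Fin d) (Fin d) R :=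
  fun i j => if j = i then a else if (j : ℕ) = i + 1 then 1 else 0

lemma jordanBlock_zero_pow_apply {R : Type*} [Semiring R] (d e : ℕ) (i j : Fin d) :
    (jordanBlock d (0 : R) ^ e) i j = if (j : ℕ) = i + e then 1 else 0 := by
  induction e generalizing j with
  | zero => simp [Matrix.one_apply, Fin.ext_iff, eq_comm]
  | succ e ih =>
    have hentry (b : Fin d) : (jordanBlock d (0 : R) ^ e) i b * jordanBlock d 0 b j =
        if (b : ℕ) = i + e ∧ (j : ℕ) = i + (e + 1) then 1 else 0 := by
      rw [ih, jordanBlock]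
      split_ifs <;> simp_all <;> omega
    rw [pow_succ, Matrix.mul_apply, Finset.sum_congr rfl fun b _ => hentry b]
    split_ifs with hj
    · rw [Finset.sum_eq_single ⟨i + e, by omega⟩] <;> simp_all [Fin.ext_iff]
    · simp [hj]

lemma jordanBlock_eq_aeval {R : Type*} [CommSemiring R] (d : ℕ) (a : R) :
    jordanBlock d a = aeval (jordanBlock d (0 : R)) (X + C a) := by
  ext i j
  rw [map_add, aeval_X, aeval_C, Matrix.add_apply, Matrix.algebraMap_matrix_apply]
  simp only [jordanBlock, eq_comm (a := j)]
  split_ifs <;> simp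

lemma aeval_jordanBlock_apply {R : Type*} [CommSemiring R] (d : ℕ) (a : R) (f : R[X])
    (i j : Fin d) :
    aeval (jordanBlock d a) f i j =
      if i ≤ j then (taylor a f).coeff ((j : ℕ) - i) else 0 := by
  rw [jordanBlock_eq_aeval, ← aeval_comp, ← taylor_apply]
  induction taylor a f using Polynomial.induction_on' with
  | add p q hp hq =>
    rw [map_add, Matrix.add_apply, hp, hq, coeff_add]
    split_ifs <;> simp
  | monomial e r =>
    rw [aeval_monomial, ← Algebra.smul_def, Matrix.smul_apply, jordanBlock_zero_pow_apply,
      coeff_monomial, smul_eq_mul, mul_ite, mul_one, mul_zero]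
    have := Fin.le_def (a := i) (b := j)
    split_ifs <;> first | rfl | omega

lemma aeval_jordanBlock_X_sub_C_pow_mul_apply {R : Type*} [CommRing R] (d : ℕ) (a : R) (f : R[X])
    (i j : Fin d) :
    aeval (jordanBlock d a) ((X - C a) ^ (d - 1) * f) i j =
      if (i : ℕ) = 0 ∧ (j : ℕ) + 1 = d then f.eval a else 0 := by
  rw [aeval_jordanBlock_apply, coeff_taylor_X_sub_C_pow_mul]
  have := Fin.le_def (a := i) (b := j)
  split_ifs with hij hd hcorner hcorner
  · rw [show (j : ℕ) - i - (d - 1) = 0 by omega, taylor_coeff_zero]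
  all_goals first | rfl | omega

lemma aeval_blockDiagonal' {R A o : Type*} [CommSemiring R] [Semiring A] [Algebra R A]
    [Fintype o] [DecidableEq o] {d : o → Type*} [∀ s, Fintype (d s)] [∀ s, DecidableEq (d s)]
    (M : ∀ s, Matrix (d s) (d s) A) (f : R[X]) :
    aeval (Matrix.blockDiagonal' M) f = Matrix.blockDiagonal' fun s => aeval (M s) f := by
  let φ : (∀ s, Matrix (d s) (d s) A) →ₐ[R] Matrix (Σ s, d s) (Σ s, d s) A :=
    AlgHom.ofLinearMap
      { toFun := Matrix.blockDiagonal'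
        map_add' := Matrix.blockDiagonal'_add
        map_smul' := Matrix.blockDiagonal'_smul }
      Matrix.blockDiagonal'_one Matrix.blockDiagonal'_mul
  rw [← aeval_pi_apply]
  exact aeval_algHom_apply φ M f

lemma Msum_succ (m : ℕ → ℕ) (s : ℕ) : Msum m (s + 1) = Msum m s + m s :=
  Finset.sum_range_succ m s

lemma Msum_monotone (m : ℕ → ℕ) : Monotone (Msum m) :=
  monotone_nat_of_le_succ fun s => by rw [Msum_succ]; omega

/-- The position `Msum m s + p` of the `p`-th index of the `s`-th block, as an equivalence. -/
def blockPos (k : ℕ) (m : ℕ → ℕ) : (Σ s : Fin k, Fin (m s)) ≃ Fin (Msum m k) :=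
  finSigmaFinEquiv.trans (finCongr (Fin.sum_univ_eq_sum_range m k))

lemma val_blockPos (k : ℕ) (m : ℕ → ℕ) (s : Fin k) (p : Fin (m s)) :
    (blockPos k m ⟨s, p⟩ : ℕ) = Msum m s + p := by
  rw [show Msum m s = ∑ i : Fin s, m i from Finset.sum_range m]
  exact finSigmaFinEquiv_apply _

lemma exists_blockPos_eq {k : ℕ} {m : ℕ → ℕ} {j : Fin (Msum m k)} (s : Fin k)
    (hsj : Msum m s ≤ j) (hjs : (j : ℕ) < Msum m (s + 1)) :
    ∃ q : Fin (m s), blockPos k m ⟨s, q⟩ = j := by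
  rw [Msum_succ] at hjs
  exact ⟨⟨j - Msum m s, by omega⟩, Fin.ext (by rw [val_blockPos]; exact Nat.add_sub_cancel' hsj)⟩

lemma blk_blockPos (k : ℕ) (m : ℕ → ℕ) (s : Fin k) (p : Fin (m s)) :
    blk k m (blockPos k m ⟨s, p⟩) = s := by
  have hfilter : (Finset.range k).filter (fun t => Msum m (t + 1) ≤ Msum m s + p) =
      Finset.range s := by
    ext t
    simp only [Finset.mem_filter, Finset.mem_range]
    constructor
    · rintro ⟨-, ht⟩
      by_contra! hst
      have := Msum_monotone m (Nat.add_le_add_right hst 1)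
      have := Msum_succ m s
      omega
    · intro hts
      exact ⟨hts.trans s.2, (Msum_monotone m (Nat.succ_le_of_lt hts)).trans (Nat.le_add_right _ _)⟩
  rw [blk, val_blockPos, hfilter, Finset.card_range]

section KblockDiag

variable (k : ℕ) (m : ℕ → ℕ) (lam : ℕ → (Fin (Msum m k) → ℝ) → ℝ) (x : Fin (Msum m k) → ℝ)

lemma KblockDiag_eq_reindexAlgEquiv :
    KblockDiag k m lam x = Matrix.reindexAlgEquiv ℝ ℝ (blockPos k m)
      (Matrix.blockDiagonal' fun s : Fin k => jordanBlock (m s) (lam s x)) := by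
  ext i j
  obtain ⟨⟨s, p⟩, rfl⟩ := (blockPos k m).surjective i
  obtain ⟨⟨t, q⟩, rfl⟩ := (blockPos k m).surjective j
  simp only [Matrix.coe_reindexAlgEquiv, Matrix.reindex_apply, Matrix.submatrix_apply,
    Equiv.symm_apply_apply, KblockDiag, blk_blockPos]
  rcases eq_or_ne s t with rfl | hst
  · simp [jordanBlock, val_blockPos, Fin.ext_iff, add_assoc]
  · rw [Matrix.blockDiagonal'_apply_ne _ _ _ hst]
    simp [hst.symm, Fin.val_inj]

lemma aeval_KblockDiag_blockPos_apply (f : ℝ[X]) (a c : Σ s : Fin k, Fin (m s)) :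
    aeval (KblockDiag k m lam x) f (blockPos k m a) (blockPos k m c) =
      Matrix.blockDiagonal' (fun s : Fin k => aeval (jordanBlock (m s) (lam s x)) f) a c := by
  rw [KblockDiag_eq_reindexAlgEquiv, aeval_algHom_apply, aeval_blockDiagonal']
  simp

lemma charpoly_KblockDiag :
    (KblockDiag k m lam x).charpoly = ∏ r ∈ Finset.range k, (X - C (lam r x)) ^ m r := by
  have hupper : (KblockDiag k m lam x).IsUpperTriangular := fun i j hji => by
    have : (j : ℕ) < i := hji
    rw [KblockDiag, if_neg (by omega), if_neg (by omega)]
  rw [Matrix.charpoly_of_isUpperTriangular _ hupper, ← (blockPos k m).prod_comp,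
    Fintype.prod_sigma, Finset.prod_range]
  simp [KblockDiag, blk_blockPos]

variable {k m lam x}

lemma exists_hasCoeffDerivAt_charpoly_KblockDiag
    (hlam : ∀ r < k, DifferentiableAt ℝ (lam r) x) {s : ℕ} (hs : s < k) (hms : m s ≠ 0)
    (v : Fin (Msum m k) → ℝ) :
    ∃ Q' : ℝ[X], HasCoeffDerivAt (fun y => (KblockDiag k m lam y).charpoly)
      ((X - C (lam s x)) ^ (m s - 1) * ((X - C (lam s x)) * Q' -
        C (m s * fderiv ℝ (lam s) x v) *
          ∏ r ∈ (Finset.range k).erase s, (X - C (lam r x)) ^ m r)) x v := by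
  obtain ⟨Q', hQ'⟩ := HasCoeffDerivAt.exists_prod (v := v) (T := (Finset.range k).erase s)
    (P := fun r y => (X - C (lam r y)) ^ m r) fun r hr =>
      have hrk : r < k := Finset.mem_range.1 (Finset.mem_of_mem_erase hr)
      ⟨_, (HasCoeffDerivAt.X_sub_C (hlam r hrk)).pow (m r)⟩
  simp only [charpoly_KblockDiag, ← Finset.mul_prod_erase _ _ (Finset.mem_range.2 hs)]
  exact ⟨Q', HasCoeffDerivAt.X_sub_C_pow_mul (hlam s hs) hms hQ'⟩

lemma Vvec_KblockDiag_blockPos (hlam : ∀ r < k, DifferentiableAt ℝ (lam r) x)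
    (s : Fin k) (q : Fin (m s)) :
    Vvec (KblockDiag k m lam) (blockPos k m ⟨s, q⟩) x =
      if (q : ℕ) + 1 = m s then
        (m s : ℝ) * pd (lam s) (blockPos k m ⟨s, ⟨0, q.pos⟩⟩) x *
          ∏ r ∈ (Finset.range k).erase s, (lam s x - lam r x) ^ m r
      else 0 := by
  choose Q' hQ' using fun a => exists_hasCoeffDerivAt_charpoly_KblockDiag hlam s.2 q.pos.ne'
    (Pi.single a 1)
  have hother (t : Fin k) (hts : t ≠ s) (p : Fin (m t)) (f : ℝ[X]) :
      aeval (KblockDiag k m lam x) f (blockPos k m ⟨t, p⟩) (blockPos k m ⟨s, q⟩) = 0 := by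
    rw [aeval_KblockDiag_blockPos_apply, Matrix.blockDiagonal'_apply_ne _ _ _ hts]
  rw [Vvec_eq_neg_sum_aeval hQ', ← (blockPos k m).sum_comp, Fintype.sum_sigma,
    Fintype.sum_eq_single s fun t hts => Finset.sum_eq_zero fun p _ => hother t hts p _]
  simp only [aeval_KblockDiag_blockPos_apply, Matrix.blockDiagonal'_apply_eq,
    aeval_jordanBlock_X_sub_C_pow_mul_apply]
  rw [Fintype.sum_eq_single ⟨0, q.pos⟩ fun p hp => if_neg fun h => hp (Fin.ext h.1)]
  split_ifs with hq <;> simp_all [pd, eval_prod]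

end KblockDiag

theorem Vvec_components_blockDiag_general (k : ℕ) (m : ℕ → ℕ) {n : ℕ} (hn : n = Msum m k)
    (lam : ℕ → (Fin n → ℝ) → ℝ) {x : Fin n → ℝ}
    (hlam : ∀ r < k, DifferentiableAt ℝ (lam r) x) {s : ℕ} (hs : s < k) (hms : 1 ≤ m s) :
    (∀ j : Fin n, Msum m s ≤ (j : ℕ) → (j : ℕ) + 1 < Msum m (s + 1) →
        Vvec (KblockDiag k m lam) j x = 0) ∧
      (∀ j j0 : Fin n, (j : ℕ) + 1 = Msum m (s + 1) → (j0 : ℕ) = Msum m s →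
        Vvec (KblockDiag k m lam) j x =
          (m s : ℝ) * pd (lam s) j0 x *
            ∏ r ∈ (Finset.range k).erase s, (lam s x - lam r x) ^ (m r)) := by
  subst hn
  lift s to Fin k using hs
  have hMs := Msum_succ m s
  refine ⟨fun j hsj hjs => ?_, fun j j0 hj hj0 => ?_⟩
  · obtain ⟨q, rfl⟩ := exists_blockPos_eq s hsj (by omega)
    rw [val_blockPos] at hjs
    rw [Vvec_KblockDiag_blockPos hlam, if_neg (by omega)]
  · obtain ⟨q, rfl⟩ := exists_blockPos_eq (j := j) s (by omega) (by omega)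
    obtain rfl : j0 = blockPos k m ⟨s, ⟨0, hms⟩⟩ := Fin.ext (by rw [hj0, val_blockPos, add_zero])
    rw [val_blockPos] at hj
    rw [Vvec_KblockDiag_blockPos hlam, if_pos (by omega)]

theorem Vvec_components_blockDiag (k : ℕ) (m : ℕ → ℕ) (hm : ∀ s < k, 1 ≤ m s)
    {n : ℕ} (hn : n = Msum m k)
    (U : Set (Fin n → ℝ)) (hU : IsOpen U)
    (lam : ℕ → (Fin n → ℝ) → ℝ)
    (hlam : ∀ s < k, ContDiffOn ℝ (⊤ : ℕ∞) (lam s) U)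
    (hdist : ∀ r < k, ∀ s < k, r ≠ s → ∀ x ∈ U, lam r x ≠ lam s x) :
    ∀ x ∈ U, ∀ s < k,
      (∀ j : Fin n, Msum m s ≤ (j : ℕ) → (j : ℕ) + 1 < Msum m (s + 1) →
        Vvec (KblockDiag k m lam) j x = 0) ∧
      (∀ j j0 : Fin n, (j : ℕ) + 1 = Msum m (s + 1) → (j0 : ℕ) = Msum m s →
        Vvec (KblockDiag k m lam) j x =
          (m s : ℝ) * pd (lam s) j0 x *
            ∏ r ∈ (Finset.range k).erase s, (lam s x - lam r x) ^ (m r)) := by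
  intro x hx s hs
  have hdiff : ∀ r < k, DifferentiableAt ℝ (lam r) x := fun r hr =>
    ((hlam r hr).contDiffAt (hU.mem_nhds hx)).differentiableAt (by simp)
  exact Vvec_components_blockDiag_general k m hn lam hdiff hs (hm s hs)
end

section
/- Let U ⊆ ℝⁿ be open and let K₁,…,Kₙ : U → ℝ be smooth with Kᵢ(x) ≠ Kⱼ(x) for all i ≠ j and all x ∈ U. Let K(x) = diag(K₁(x),…,Kₙ(x)) and let σ₁,…,σₙ : U → ℝ be determined by det(t·I − K(x)) = tⁿ − σ₁(x)·t^{n−1} − … − σₙ(x). Then the identity Σ_{m=1}^n Σ_{s=1}^n (∂σ_m/∂x^s)(x) · [K(x)^{n−m}]_{s,i} = 0 (with K⁰ = I) holds for all i ∈ {1,…,n} and all x ∈ U if and only if the weak nonlinearity condition (∂Kᵢ/∂xⁱ)(x) = 0 holds for all i ∈ {1,…,n} and all x ∈ U. -/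
open scoped BigOperators

/-!
Fix `x` and `i`, and put `t = Kᵢ(x)`. Since `K(x)` is diagonal, the `i`-th identity reads
`∑ₘ ∂ᵢσₘ(x) tⁿ⁻ᵐ = 0`, and its left-hand side is minus the `i`-th partial derivative at `x` of
`y ↦ det(t·I − K(y)) = ∏ⱼ (t − Kⱼ(y))`, with `t` held constant. The factor `j = i` vanishes at `x`,
so by the product rule that left-hand side is `∂ᵢKᵢ(x) ∏_{j ≠ i} (Kᵢ(x) − Kⱼ(x))`, where the
product is nonzero.
-/

open Polynomial

section FDeriv

variable {𝕜 E ι : Type*} [NontriviallyNormedField 𝕜] [NormedAddCommGroup E] [NormedSpace 𝕜 E]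
  {x : E}

lemma differentiableAt_coeff_prod {s : Finset ι} {p : ι → E → 𝕜[X]}
    (hp : ∀ i ∈ s, ∀ k, DifferentiableAt 𝕜 (fun y => (p i y).coeff k) x) (k : ℕ) :
    DifferentiableAt 𝕜 (fun y => (∏ i ∈ s, p i y).coeff k) x := by
  classical
  induction s using Finset.induction_on generalizing k with
  | empty => simp
  | insert a s ha ih =>
    simp only [Finset.prod_insert ha, coeff_mul]
    exact DifferentiableAt.fun_sum fun kl _ =>
      (hp a (Finset.mem_insert_self a s) kl.1).mul
        (ih (fun i hi => hp i (Finset.mem_insert_of_mem hi)) kl.2)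

lemma hasFDerivAt_prod_sub_of_mem [DecidableEq ι] {s : Finset ι} {f : ι → E → 𝕜} {i : ι}
    (hi : i ∈ s) (hf : ∀ j ∈ s, DifferentiableAt 𝕜 (f j) x) :
    HasFDerivAt (fun y => ∏ j ∈ s, (f i x - f j y))
      ((∏ j ∈ s.erase i, (f i x - f j x)) • -fderiv 𝕜 (f i) x) x := by
  have product_rule := HasFDerivAt.finsetProd fun j hj => (hf j hj).hasFDerivAt.const_sub (f i x)
  refine product_rule.congr_fderiv (Finset.sum_eq_single_of_mem i hi fun j _ hji => ?_)
  have prod_eq_zero : ∏ k ∈ s.erase j, (f i x - f k x) = 0 :=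
    Finset.prod_eq_zero (Finset.mem_erase.mpr ⟨hji.symm, hi⟩) (sub_self _)
  simp [prod_eq_zero]

variable [Fintype ι] [DecidableEq ι] {A : E → Matrix ι ι 𝕜}

lemma differentiableAt_coeff_charpoly
    (hA : ∀ i j, DifferentiableAt 𝕜 (fun y => A y i j) x) (k : ℕ) :
    DifferentiableAt 𝕜 (fun y => (A y).charpoly.coeff k) x := by
  have differentiableAt_coeff_charmatrix (i j : ι) (k : ℕ) :
      DifferentiableAt 𝕜 (fun y => ((A y).charmatrix i j).coeff k) x := by
    simp only [Matrix.charmatrix_apply, coeff_sub, coeff_C]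
    split_ifs
    · exact (hA i j).const_sub _
    · exact differentiableAt_const _
  simp only [Matrix.charpoly, Matrix.det_apply, finsetSum_coeff, coeff_smul]
  exact DifferentiableAt.fun_sum fun π _ => (differentiableAt_coeff_prod
    (fun i _ => differentiableAt_coeff_charmatrix (π i) i) k).const_smul _

lemma hasFDerivAt_eval_charpoly
    (hA : ∀ i j, DifferentiableAt 𝕜 (fun y => A y i j) x) (t : 𝕜) :
    HasFDerivAt (fun y => (A y).charpoly.eval t)
      (∑ k ∈ Finset.range (Fintype.card ι),
        t ^ k • fderiv 𝕜 (fun y => (A y).charpoly.coeff k) x) x := by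
  have eval_charpoly (y : E) : (A y).charpoly.eval t =
      t ^ Fintype.card ι + ∑ k ∈ Finset.range (Fintype.card ι), (A y).charpoly.coeff k * t ^ k := by
    conv_lhs => rw [(A y).charpoly_monic.as_sum, (A y).charpoly_natDegree_eq_dim]
    simp [eval_finsetSum]
  simp only [eval_charpoly]
  exact (HasFDerivAt.fun_sum fun k _ =>
    (differentiableAt_coeff_charpoly hA k).hasFDerivAt.mul_const (t ^ k)).const_add _

end FDeriv

section SigmaCoeff

variable {n : ℕ} {x : Fin n → ℝ}

lemma sum_pd_sigmaCoeff_mul_pow {A : (Fin n → ℝ) → Matrix (Fin n) (Fin n) ℝ}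
    (hA : ∀ i j, DifferentiableAt ℝ (fun y => A y i j) x) (t : ℝ) (s : Fin n) :
    ∑ m ∈ Finset.Icc 1 n, pd (sigmaCoeff A m) s x * t ^ (n - m) =
      -pd (fun y => (A y).charpoly.eval t) s x := by
  have pd_sigmaCoeff (m : ℕ) :
      pd (sigmaCoeff A m) s x = -pd (fun y => (A y).charpoly.coeff (n - m)) s x := by
    change fderiv ℝ (fun y => -(A y).charpoly.coeff (n - m)) x (Pi.single s 1) = _
    rw [fderiv_fun_neg, neg_apply, pd]
  calc
    _ = ∑ m ∈ Finset.Ico 1 (n + 1),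
          -(pd (fun y => (A y).charpoly.coeff (n - m)) s x * t ^ (n - m)) := by
      simp only [pd_sigmaCoeff, neg_mul, Finset.Ico_add_one_right_eq_Icc]
    _ = ∑ k ∈ Finset.range n, -(pd (fun y => (A y).charpoly.coeff k) s x * t ^ k) := by
      rw [Finset.sum_Ico_reflect (fun k => -(pd (fun y => (A y).charpoly.coeff k) s x * t ^ k))
        1 le_rfl]
      simp
    _ = -pd (fun y => (A y).charpoly.eval t) s x := by
      simp [pd, (hasFDerivAt_eval_charpoly hA t).fderiv, mul_comm]

variable {K : Fin n → (Fin n → ℝ) → ℝ}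

lemma pd_eval_charpoly_diagonal (hK : ∀ j, DifferentiableAt ℝ (K j) x) (i s : Fin n) :
    pd (fun y => (Matrix.diagonal fun r => K r y).charpoly.eval (K i x)) s x =
      -(pd (K i) s x * ∏ j ∈ Finset.univ.erase i, (K i x - K j x)) := by
  simp only [pd, Matrix.charpoly_diagonal, eval_prod, eval_sub, eval_X, eval_C]
  rw [(hasFDerivAt_prod_sub_of_mem (Finset.mem_univ i) fun j _ => hK j).fderiv]
  simp [mul_comm]

lemma sum_pd_sigmaCoeff_mul_diagonal_pow (hK : ∀ j, DifferentiableAt ℝ (K j) x) (i : Fin n) :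
    ∑ m ∈ Finset.Icc 1 n, ∑ s : Fin n,
        pd (sigmaCoeff (fun y => Matrix.diagonal fun r => K r y) m) s x *
          ((Matrix.diagonal fun r => K r x) ^ (n - m)) s i =
      pd (K i) i x * ∏ j ∈ Finset.univ.erase i, (K i x - K j x) := by
  have differentiableAt_diagonal (r s : Fin n) :
      DifferentiableAt ℝ (fun y => Matrix.diagonal (fun j => K j y) r s) x := by
    obtain rfl | hrs := eq_or_ne r s
    · simpa using hK r
    · simp [hrs]
  calc
    _ = ∑ m ∈ Finset.Icc 1 n,
          pd (sigmaCoeff (fun y => Matrix.diagonal fun r => K r y) m) i x * K i x ^ (n - m) := by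
      simp [Matrix.diagonal_pow, Matrix.diagonal_apply]
    _ = -pd (fun y => (Matrix.diagonal fun r => K r y).charpoly.eval (K i x)) i x :=
      sum_pd_sigmaCoeff_mul_pow differentiableAt_diagonal (K i x) i
    _ = _ := by rw [pd_eval_charpoly_diagonal hK, neg_neg]

end SigmaCoeff

theorem weakNonlinearity_criterion_diagonal_general {n : ℕ} {K : Fin n → (Fin n → ℝ) → ℝ}
    {x : Fin n → ℝ} (hK : ∀ j, DifferentiableAt ℝ (K j) x) {i : Fin n}
    (hdist : ∀ j, j ≠ i → K i x ≠ K j x) :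
    ∑ m ∈ Finset.Icc 1 n, ∑ s : Fin n,
        pd (sigmaCoeff (fun y => Matrix.diagonal fun r => K r y) m) s x *
          ((Matrix.diagonal fun r => K r x) ^ (n - m)) s i = 0 ↔
      pd (K i) i x = 0 := by
  have prod_sub_ne_zero : ∏ j ∈ Finset.univ.erase i, (K i x - K j x) ≠ 0 :=
    Finset.prod_ne_zero_iff.mpr fun j hj => sub_ne_zero.mpr (hdist j (Finset.ne_of_mem_erase hj))
  rw [sum_pd_sigmaCoeff_mul_diagonal_pow hK, mul_eq_zero_iff_right prod_sub_ne_zero]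

theorem weakNonlinearity_criterion_diagonal {n : ℕ} (U : Set (Fin n → ℝ)) (hU : IsOpen U)
    (K : Fin n → (Fin n → ℝ) → ℝ)
    (hK : ∀ i, ContDiffOn ℝ (⊤ : ℕ∞) (K i) U)
    (hdist : ∀ i j : Fin n, i ≠ j → ∀ x ∈ U, K i x ≠ K j x) :
    (∀ i : Fin n, ∀ x ∈ U,
        (∑ m ∈ Finset.Icc 1 n, ∑ s : Fin n,
          pd (sigmaCoeff (fun y => Matrix.diagonal (fun r => K r y)) m) s x *
            ((Matrix.diagonal (fun r => K r x)) ^ (n - m)) s i) = 0)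
      ↔ (∀ i : Fin n, ∀ x ∈ U, pd (K i) i x = 0) :=
  forall_congr' fun i => forall₂_congr fun x hx => weakNonlinearity_criterion_diagonal_general
    (fun j => ((hK j).contDiffAt (hU.mem_nhds hx)).differentiableAt (by simp))
    fun j hji => hdist i j hji.symm x hx
end
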